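/- Let ‖·‖_D be an idempotent D-norm on ℝ^d, generated by Z with independent copy Z', whose complete dependence frame A_1, …, A_K is nonempty; i.e. A_1, …, A_K are nonempty pairwise disjoint subsets of {1, …, d} with |A_k| ≥ 2 for each k, 1 ≤ K < d, such that for each k and all i, j ∈ A_k the bivariate projection satisfies E(max(|x| Z_i, |y| Z_j)) = max(|x|, |y|) for all (x,y) ∈ ℝ², while for every pair i ≠ j not contained in a common A_k there exists (x,y) ∈ ℝ² with E(max(|x| Z_i, |y| Z_j)) ≠ max(|x|, |y|). Then ‖x‖_D = Σ_{k=1}^K max_{i ∈ A_k} |x_i| + Σ_{i ∈ {1,…,d} \ (A_1 ∪ … ∪ A_K)} |x_i| for all x ∈ ℝ^d. -/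

import Mathlib

open MeasureTheory ProbabilityTheory

/-!
For a bivariate idempotent generator `(X, Y)` with `X` and `Y` not almost surely equal, the
Hellinger affinity `r = E (√X √Y)` is less than `1`. Idempotency replaces `(X, Y)` by its
product with an independent copy; conditioning on one factor turns a bound
`E (min (a X) (b Y)) ≤ C √(a b)` into the same bound with `C r` in place of `C`. As
`min u v ≤ √(u v)` provides a first bound, iteration gives `min X Y = 0` almost surely.

Two coordinates of an idempotent generator are thus either equal or have disjoint supports, almost
surely. Hence almost every realization of the generator is a multiple of the indicator of a block
of the frame, or of a single index outside all blocks, and the supremum over the indices is a sum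
over blocks and loose indices with at most one nonzero term.
-/

section Bivariate

variable {Ω : Type*} [MeasurableSpace Ω] {μ : Measure Ω} {X Y : Ω → ℝ}

lemma min_le_sqrt_mul_sqrt (a b : ℝ) : min a b ≤ √a * √b := by
  obtain h | h := le_total (min a b) 0
  · exact h.trans (by positivity)
  · calc min a b = √(min a b) * √(min a b) := (Real.mul_self_sqrt h).symm
      _ ≤ √a * √b := by
        gcongr
        · exact min_le_left a b
        · exact min_le_right a b

lemma integrable_sqrt_mul_sqrt (hX : Integrable X μ) (hY : Integrable Y μ) :
    Integrable (fun ω => √(X ω) * √(Y ω)) μ := by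
  refine (hX.abs.add hY.abs).mono'
    (hX.aemeasurable.sqrt.mul hY.aemeasurable.sqrt).aestronglyMeasurable (.of_forall fun ω => ?_)
  have hsq_le (x : ℝ) : √x ^ 2 ≤ |x| := by
    simpa only [Real.sq_sqrt'] using max_le (le_abs_self x) (abs_nonneg x)
  rw [Real.norm_of_nonneg (by positivity), Pi.add_apply]
  nlinarith [hsq_le (X ω), hsq_le (Y ω), two_mul_le_add_sq √(X ω) √(Y ω),
    mul_nonneg (Real.sqrt_nonneg (X ω)) (Real.sqrt_nonneg (Y ω))]

lemma integral_sqrt_mul_sqrt_lt (hX₀ : 0 ≤ᵐ[μ] X) (hY₀ : 0 ≤ᵐ[μ] Y) (hX : Integrable X μ)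
    (hY : Integrable Y μ) (hne : ¬ X =ᵐ[μ] Y) :
    ∫ ω, √(X ω) * √(Y ω) ∂μ < (∫ ω, X ω ∂μ + ∫ ω, Y ω ∂μ) / 2 := by
  have hsub : ∀ᵐ ω ∂μ, (X ω + Y ω) / 2 - √(X ω) * √(Y ω) = (√(X ω) - √(Y ω)) ^ 2 / 2 := by
    filter_upwards [hX₀, hY₀] with ω hXω hYω
    rw [sub_sq, Real.sq_sqrt hXω, Real.sq_sqrt hYω]
    ring
  have hle : (fun ω => √(X ω) * √(Y ω)) ≤ᵐ[μ] fun ω => (X ω + Y ω) / 2 := by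
    filter_upwards [hsub] with ω hω
    exact sub_nonneg.1 (hω ▸ by positivity)
  have hsqrt := integrable_sqrt_mul_sqrt hX hY
  have hmean : Integrable (fun ω => (X ω + Y ω) / 2) μ := (hX.add hY).div_const 2
  rw [← integral_add hX hY, ← integral_div]
  refine (integral_mono_ae hsqrt hmean hle).lt_of_ne fun heq => hne ?_
  filter_upwards [(integral_eq_iff_of_ae_le hsqrt hmean hle).1 heq, hsub, hX₀, hY₀]
    with ω hω hsubω hXω hYω
  have hsq : (√(X ω) - √(Y ω)) ^ 2 = 0 := by linarith
  exact (Real.sqrt_inj hXω hYω).1 (sub_eq_zero.1 (pow_eq_zero_iff two_ne_zero |>.1 hsq))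

lemma integral_min_le_mul_integral_sqrt [SFinite μ] (hX₀ : 0 ≤ᵐ[μ] X) (hY₀ : 0 ≤ᵐ[μ] Y)
    (hX : Integrable X μ) (hY : Integrable Y μ)
    (hidem : ∀ a b : ℝ, 0 ≤ a → 0 ≤ b →
      ∫ p, min (a * (X p.1 * X p.2)) (b * (Y p.1 * Y p.2)) ∂(μ.prod μ) =
        ∫ ω, min (a * X ω) (b * Y ω) ∂μ)
    {C : ℝ} (hC : ∀ a b : ℝ, 0 ≤ a → 0 ≤ b → ∫ ω, min (a * X ω) (b * Y ω) ∂μ ≤ C * (√a * √b))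
    {a b : ℝ} (ha : 0 ≤ a) (hb : 0 ≤ b) :
    ∫ ω, min (a * X ω) (b * Y ω) ∂μ ≤ C * (∫ ω, √(X ω) * √(Y ω) ∂μ) * (√a * √b) := by
  have hint : Integrable (fun p => min (a * (X p.1 * X p.2)) (b * (Y p.1 * Y p.2))) (μ.prod μ) :=
    ((hX.mul_prod hX).const_mul a).inf ((hY.mul_prod hY).const_mul b)
  calc ∫ ω, min (a * X ω) (b * Y ω) ∂μ
      = ∫ ω, ∫ ω', min (a * (X ω * X ω')) (b * (Y ω * Y ω')) ∂μ ∂μ := by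
        rw [← hidem a b ha hb, integral_prod _ hint]
    _ ≤ ∫ ω, C * (√a * √b) * (√(X ω) * √(Y ω)) ∂μ := by
        refine integral_mono_ae hint.integral_prod_left
          ((integrable_sqrt_mul_sqrt hX hY).const_mul _) ?_
        filter_upwards [hX₀, hY₀] with ω hXω hYω
        have hcond := hC (a * X ω) (b * Y ω) (mul_nonneg ha hXω) (mul_nonneg hb hYω)
        rw [Real.sqrt_mul ha, Real.sqrt_mul hb] at hcond
        simp only [mul_assoc] at hcond ⊢
        exact hcond.trans_eq (by ring)
    _ = C * (∫ ω, √(X ω) * √(Y ω) ∂μ) * (√a * √b) := by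
        rw [integral_const_mul]
        ring

lemma integral_min_le_integral_sqrt_pow [SFinite μ] (hX₀ : 0 ≤ᵐ[μ] X) (hY₀ : 0 ≤ᵐ[μ] Y)
    (hX : Integrable X μ) (hY : Integrable Y μ)
    (hidem : ∀ a b : ℝ, 0 ≤ a → 0 ≤ b →
      ∫ p, min (a * (X p.1 * X p.2)) (b * (Y p.1 * Y p.2)) ∂(μ.prod μ) =
        ∫ ω, min (a * X ω) (b * Y ω) ∂μ) (n : ℕ) :
    ∀ a b : ℝ, 0 ≤ a → 0 ≤ b → ∫ ω, min (a * X ω) (b * Y ω) ∂μ ≤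
      (∫ ω, √(X ω) * √(Y ω) ∂μ) ^ (n + 1) * (√a * √b) := by
  induction n with
  | zero =>
    intro a b ha hb
    rw [zero_add, pow_one, ← integral_mul_const]
    refine integral_mono ((hX.const_mul a).inf (hY.const_mul b))
      ((integrable_sqrt_mul_sqrt hX hY).mul_const _) fun ω => ?_
    calc min (a * X ω) (b * Y ω) ≤ √(a * X ω) * √(b * Y ω) := min_le_sqrt_mul_sqrt _ _
      _ = √(X ω) * √(Y ω) * (√a * √b) := by
        rw [Real.sqrt_mul ha, Real.sqrt_mul hb]
        ring
  | succ n ih =>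
    intro a b ha hb
    rw [pow_succ]
    exact integral_min_le_mul_integral_sqrt hX₀ hY₀ hX hY hidem ih ha hb

theorem ae_eq_or_ae_eq_zero_or_eq_zero_of_idempotent [SFinite μ] (hX₀ : 0 ≤ᵐ[μ] X)
    (hY₀ : 0 ≤ᵐ[μ] Y) (hX : Integrable X μ) (hY : Integrable Y μ)
    (hX₁ : ∫ ω, X ω ∂μ = 1) (hY₁ : ∫ ω, Y ω ∂μ = 1)
    (hidem : ∀ a b : ℝ, 0 ≤ a → 0 ≤ b →
      ∫ p, min (a * (X p.1 * X p.2)) (b * (Y p.1 * Y p.2)) ∂(μ.prod μ) =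
        ∫ ω, min (a * X ω) (b * Y ω) ∂μ) :
    X =ᵐ[μ] Y ∨ ∀ᵐ ω ∂μ, X ω = 0 ∨ Y ω = 0 := by
  refine or_iff_not_imp_left.2 fun hne => ?_
  have haff_nonneg : 0 ≤ ∫ ω, √(X ω) * √(Y ω) ∂μ := integral_nonneg fun ω => by positivity
  have haff_lt_one : ∫ ω, √(X ω) * √(Y ω) ∂μ < 1 := by
    simpa [hX₁, hY₁] using integral_sqrt_mul_sqrt_lt hX₀ hY₀ hX hY hne
  have hmin_nonneg : 0 ≤ᵐ[μ] fun ω => min (X ω) (Y ω) := by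
    filter_upwards [hX₀, hY₀] with ω using le_min
  have hmin_le : ∫ ω, min (X ω) (Y ω) ∂μ ≤ 0 := by
    refine ge_of_tendsto' ((Filter.tendsto_add_atTop_iff_nat 1).2
      (tendsto_pow_atTop_nhds_zero_of_lt_one haff_nonneg haff_lt_one)) fun n => ?_
    simpa using integral_min_le_integral_sqrt_pow hX₀ hY₀ hX hY hidem n 1 1 zero_le_one zero_le_one
  have hmin_eq := (integral_eq_zero_iff_of_nonneg_ae hmin_nonneg (hX.inf hY)).1
    (hmin_le.antisymm (integral_nonneg_of_ae hmin_nonneg))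
  filter_upwards [hmin_eq] with ω hω
  exact (min_choice (X ω) (Y ω)).imp (·.symm.trans hω) (·.symm.trans hω)

end Bivariate

section Realization

variable {ι κ : Type*}

lemma iSup_mul_eq_biSup_mul_of_eq_on {s : Set ι} {f z : ι → ℝ} {t : ℝ} (ht : 0 ≤ t)
    (hs : ∀ i ∈ s, z i = t) (hsc : ∀ i ∉ s, z i = 0) :
    ⨆ i, f i * z i = (⨆ i ∈ s, f i) * t := by
  rw [Real.iSup_mul_of_nonneg ht]
  refine iSup_congr fun i => ?_
  by_cases hi : i ∈ s
  · simp [hs i hi, hi]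
  · simp [hsc i hi, hi]

lemma ciSup_eq_of_forall_ne_eq_zero [Finite ι] {f : ι → ℝ} {i : ι} (hi : 0 ≤ f i)
    (hf : ∀ j, j ≠ i → f j = 0) : ⨆ j, f j = f i := by
  have : Nonempty ι := ⟨i⟩
  refine (ciSup_le fun j => ?_).antisymm (le_ciSup (Set.finite_range f).bddAbove i)
  obtain rfl | hji := eq_or_ne j i
  · rfl
  · exact (hf j hji).trans_le hi

lemma iSup_abs_single_add_single_mul [Finite ι] [DecidableEq ι] {i j : ι} (hij : i ≠ j) (a b : ℝ)
    {z : ι → ℝ} (hz : 0 ≤ z) :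
    ⨆ l, |(Pi.single i a + Pi.single j b : ι → ℝ) l| * z l = max (|a| * z i) (|b| * z j) := by
  have : Nonempty ι := ⟨i⟩
  apply le_antisymm
  · refine ciSup_le fun l => ?_
    obtain rfl | hli := eq_or_ne l i
    · simp [hij]
    obtain rfl | hlj := eq_or_ne l j
    · simp [hij.symm]
    · simpa [hli, hlj] using Or.inl (mul_nonneg (abs_nonneg a) (hz i))
  · refine max_le ?_ ?_
    · exact le_ciSup_of_le (Set.finite_range _).bddAbove i (by simp [hij])
    · exact le_ciSup_of_le (Set.finite_range _).bddAbove j (by simp [hij.symm])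

lemma iSup_abs_mul_eq_sum_add_sum [Fintype ι] [DecidableEq ι] [Nonempty ι] [Fintype κ]
    {A : κ → Finset ι} (hdisj : ∀ k l, k ≠ l → Disjoint (A k) (A l)) {q : κ → ι}
    (hq : ∀ k, q k ∈ A k) {z : ι → ℝ} (hz : 0 ≤ z)
    (hconst : ∀ k, ∀ i ∈ A k, ∀ j ∈ A k, z i = z j)
    (hblock : ∀ i j, i ≠ j → z i ≠ 0 → z j ≠ 0 → ∃ k, i ∈ A k ∧ j ∈ A k) (x : ι → ℝ) :
    ⨆ i, |x i| * z i = ∑ k, (⨆ i ∈ A k, |x i|) * z (q k) +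
      ∑ i ∈ Finset.univ \ Finset.univ.biUnion A, |x i| * z i := by
  obtain ⟨i, hi⟩ : ∃ i, ∀ j, j ≠ i → z j ≠ 0 → ∃ k, i ∈ A k ∧ j ∈ A k := by
    by_cases h : ∃ i, z i ≠ 0
    · obtain ⟨i, hzi⟩ := h
      exact ⟨i, fun j hji => hblock i j hji.symm hzi⟩
    · exact ⟨Classical.arbitrary ι, fun j _ hzj => (h ⟨j, hzj⟩).elim⟩
  by_cases hmem : ∃ k, i ∈ A k
  · obtain ⟨k, hik⟩ := hmem
    have hzero : ∀ j ∉ A k, z j = 0 := by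
      intro j hjk
      by_contra hzj
      obtain ⟨l, hil, hjl⟩ := hi j (ne_of_mem_of_not_mem hik hjk).symm hzj
      obtain rfl : l = k := by_contra fun hlk => Finset.disjoint_left.1 (hdisj l k hlk) hil hik
      exact hjk hjl
    have hsup : ⨆ j, |x j| * z j = (⨆ j ∈ A k, |x j|) * z (q k) :=
      iSup_mul_eq_biSup_mul_of_eq_on (s := A k) (hz _) (fun j hj => hconst k j hj _ (hq k)) hzero
    rw [hsup, Finset.sum_eq_single k, Finset.sum_eq_zero, add_zero]
    · intro j hj
      rw [hzero j fun hjk => (Finset.mem_sdiff.1 hj).2 (Finset.mem_biUnion.2 ⟨k, by simp, hjk⟩),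
        mul_zero]
    · intro l _ hlk
      rw [hzero _ (Finset.disjoint_left.1 (hdisj l k hlk) (hq l)), mul_zero]
    · simp
  · have hzero : ∀ j, j ≠ i → z j = 0 := fun j hji =>
      by_contra fun hzj => hmem ((hi j hji hzj).imp fun _ => And.left)
    have hsup : ⨆ j, |x j| * z j = |x i| * z i :=
      ciSup_eq_of_forall_ne_eq_zero (mul_nonneg (abs_nonneg _) (hz i)) fun j hji => by
        rw [hzero j hji, mul_zero]
    have hloose : i ∈ Finset.univ \ Finset.univ.biUnion A := by simpa using hmem
    rw [hsup, Finset.sum_eq_zero, zero_add, Finset.sum_eq_single_of_mem i hloose]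
    · intro j _ hji
      rw [hzero j hji, mul_zero]
    · intro k _
      rw [hzero _ fun hqi => hmem ⟨k, hqi ▸ hq k⟩, mul_zero]

end Realization

/-- A generator of a D-norm on `ℝ^ι`. -/
structure IsDNormGenerator {Ω ι : Type*} [MeasurableSpace Ω] (Z : Ω → ι → ℝ) (μ : Measure Ω) :
    Prop where
  nonneg : ∀ i, ∀ᵐ ω ∂μ, 0 ≤ Z ω i
  integrable : ∀ i, Integrable (fun ω => Z ω i) μ
  integral_eq_one : ∀ i, ∫ ω, Z ω i ∂μ = 1

/-- The D-norm `‖x‖_D = E (max |x i| Z i)` generated by `Z`, for a finite index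
type `ι`: over an infinite one, an unbounded supremum would be `0`. -/
noncomputable def dNorm {Ω ι : Type*} [MeasurableSpace Ω] (Z : Ω → ι → ℝ) (μ : Measure Ω)
    (x : ι → ℝ) : ℝ :=
  ∫ ω, ⨆ i, |x i| * Z ω i ∂μ

/-- Complete dependence of the coordinates `i` and `j` of a D-norm generated by `Z`: the bivariate
projection to these coordinates is the sup-norm. -/
def CompletelyDependent {Ω ι : Type*} [MeasurableSpace Ω] (Z : Ω → ι → ℝ) (μ : Measure Ω)
    (i j : ι) : Prop :=
  ∀ x y : ℝ, ∫ ω, max (|x| * Z ω i) (|y| * Z ω j) ∂μ = max |x| |y|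

/-- The family `A` is a complete dependence frame of the D-norm generated by `Z`: its disjoint
blocks group the completely dependent coordinates. Singleton blocks are allowed, and so is the empty
family, for a D-norm without completely dependent pairs. -/
structure IsCompleteDependenceFrame {Ω ι κ : Type*} [MeasurableSpace Ω] (Z : Ω → ι → ℝ)
    (μ : Measure Ω) (A : κ → Finset ι) : Prop where
  nonempty : ∀ k, (A k).Nonempty
  disjoint : ∀ k l, k ≠ l → Disjoint (A k) (A l)
  completelyDependent : ∀ k, ∀ i ∈ A k, ∀ j ∈ A k, CompletelyDependent Z μ i j
  exists_mem : ∀ i j, i ≠ j → CompletelyDependent Z μ i j → ∃ k, i ∈ A k ∧ j ∈ A k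

section DNorm

variable {Ω ι κ : Type*} [MeasurableSpace Ω] {μ : Measure Ω} {Z Z' : Ω → ι → ℝ}

lemma dNorm_mul_eq_dNorm_prod [Countable ι] [IsProbabilityMeasure μ] (hindep : IndepFun Z Z' μ)
    (hid : IdentDistrib Z' Z μ μ) (x : ι → ℝ) :
    dNorm (Z * Z') μ x = dNorm (fun p : Ω × Ω => Z p.1 * Z p.2) (μ.prod μ) x := by
  have hZ : AEMeasurable Z μ := hid.aemeasurable_snd
  have hlaw : HasLaw Z (μ.map Z) μ := ⟨hZ, rfl⟩
  have hfst : IdentDistrib Z (fun p : Ω × Ω => Z p.1) μ (μ.prod μ) :=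
    hlaw.identDistrib (hlaw.comp measurePreserving_fst.hasLaw)
  have hsnd : IdentDistrib Z (fun p : Ω × Ω => Z p.2) μ (μ.prod μ) :=
    hlaw.identDistrib (hlaw.comp measurePreserving_snd.hasLaw)
  have hpair : IdentDistrib (fun ω => (Z ω, Z' ω)) (fun p : Ω × Ω => (Z p.1, Z p.2)) μ (μ.prod μ) :=
    hfst.prodMk (hid.trans hsnd) hindep (indepFun_prod₀ hZ hZ)
  have hsup : Measurable fun w : (ι → ℝ) × (ι → ℝ) => ⨆ i, |x i| * (w.1 i * w.2 i) :=
    Measurable.iSup fun i => by fun_prop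
  exact (hpair.comp hsup).integral_eq

lemma dNorm_single_add_single [Finite ι] [DecidableEq ι] (hZ : ∀ i, ∀ᵐ ω ∂μ, 0 ≤ Z ω i) {i j : ι}
    (hij : i ≠ j) (a b : ℝ) :
    dNorm Z μ (Pi.single i a + Pi.single j b) = ∫ ω, max (|a| * Z ω i) (|b| * Z ω j) ∂μ := by
  refine integral_congr_ae ?_
  filter_upwards [ae_all_iff.2 hZ] with ω hω using iSup_abs_single_add_single_mul hij a b hω

namespace IsDNormGenerator

lemma prod [SFinite μ] (hZ : IsDNormGenerator Z μ) :
    IsDNormGenerator (fun p : Ω × Ω => Z p.1 * Z p.2) (μ.prod μ) where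
  nonneg i := by
    filter_upwards [Measure.quasiMeasurePreserving_fst.ae (hZ.nonneg i),
      Measure.quasiMeasurePreserving_snd.ae (hZ.nonneg i)] with p using mul_nonneg
  integrable i := (hZ.integrable i).mul_prod (hZ.integrable i)
  integral_eq_one i := by
    simp only [Pi.mul_apply]
    rw [integral_prod_mul (fun ω => Z ω i) (fun ω => Z ω i), hZ.integral_eq_one, one_mul]

lemma integral_min (hZ : IsDNormGenerator Z μ) (i j : ι) (a b : ℝ) :
    ∫ ω, min (a * Z ω i) (b * Z ω j) ∂μ = a + b - ∫ ω, max (a * Z ω i) (b * Z ω j) ∂μ := by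
  have hi : Integrable (fun ω => a * Z ω i) μ := (hZ.integrable i).const_mul a
  have hj : Integrable (fun ω => b * Z ω j) μ := (hZ.integrable j).const_mul b
  have hadd : Integrable (fun ω => a * Z ω i + b * Z ω j) μ := hi.add hj
  have hmax : Integrable (fun ω => max (a * Z ω i) (b * Z ω j)) μ := hi.sup hj
  calc ∫ ω, min (a * Z ω i) (b * Z ω j) ∂μ
      = ∫ ω, (a * Z ω i + b * Z ω j - max (a * Z ω i) (b * Z ω j)) ∂μ := by
        simp only [← min_add_max (a * Z _ i), add_sub_cancel_right]
    _ = a + b - ∫ ω, max (a * Z ω i) (b * Z ω j) ∂μ := by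
        rw [integral_sub hadd hmax, integral_add hi hj]
        simp only [integral_const_mul, hZ.integral_eq_one, mul_one]

lemma completelyDependent_iff (hZ : IsDNormGenerator Z μ) (i j : ι) :
    CompletelyDependent Z μ i j ↔ (fun ω => Z ω i) =ᵐ[μ] fun ω => Z ω j := by
  constructor
  · intro h
    have hi := hZ.integrable i
    have hj := hZ.integrable j
    have hmax : ∫ ω, max (Z ω i) (Z ω j) ∂μ = 1 := by simpa using h 1 1
    have hi_eq := (integral_eq_iff_of_ae_le hi (hi.sup hj) (.of_forall fun _ => le_max_left _ _)).1
      ((hZ.integral_eq_one i).trans hmax.symm)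
    have hj_eq := (integral_eq_iff_of_ae_le hj (hi.sup hj) (.of_forall fun _ => le_max_right _ _)).1
      ((hZ.integral_eq_one j).trans hmax.symm)
    exact hi_eq.trans hj_eq.symm
  · intro h x y
    calc ∫ ω, max (|x| * Z ω i) (|y| * Z ω j) ∂μ = ∫ ω, max |x| |y| * Z ω i ∂μ := by
          refine integral_congr_ae ?_
          filter_upwards [h, hZ.nonneg i] with ω hω hnonneg
          rw [← hω, max_mul_of_nonneg _ _ hnonneg]
      _ = max |x| |y| := by rw [integral_const_mul, hZ.integral_eq_one, mul_one]

theorem completelyDependent_or_ae_eq_zero_or_eq_zero [Finite ι] [SFinite μ]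
    (hZ : IsDNormGenerator Z μ)
    (hidem : ∀ x, dNorm (fun p : Ω × Ω => Z p.1 * Z p.2) (μ.prod μ) x = dNorm Z μ x)
    {i j : ι} (hij : i ≠ j) :
    CompletelyDependent Z μ i j ∨ ∀ᵐ ω ∂μ, Z ω i = 0 ∨ Z ω j = 0 := by
  classical
  rw [hZ.completelyDependent_iff]
  refine ae_eq_or_ae_eq_zero_or_eq_zero_of_idempotent (hZ.nonneg i) (hZ.nonneg j)
    (hZ.integrable i) (hZ.integrable j) (hZ.integral_eq_one i) (hZ.integral_eq_one j)
    fun a b ha hb => ?_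
  have hmax := hidem (Pi.single i a + Pi.single j b)
  rw [dNorm_single_add_single hZ.prod.nonneg hij, dNorm_single_add_single hZ.nonneg hij,
    abs_of_nonneg ha, abs_of_nonneg hb] at hmax
  rw [hZ.integral_min, ← hmax]
  exact hZ.prod.integral_min i j a b

end IsDNormGenerator

theorem idempotent_dNorm_with_CDF_general [Fintype ι] [DecidableEq ι] [Nonempty ι] [Fintype κ]
    [IsProbabilityMeasure μ] (hZ : IsDNormGenerator Z μ) (hindep : IndepFun Z Z' μ)
    (hid : IdentDistrib Z' Z μ μ) (hidem : ∀ x, dNorm (Z * Z') μ x = dNorm Z μ x)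
    {A : κ → Finset ι} (hA : IsCompleteDependenceFrame Z μ A) (x : ι → ℝ) :
    dNorm Z μ x = (∑ k, ⨆ i ∈ A k, |x i|) +
      ∑ i ∈ Finset.univ \ Finset.univ.biUnion A, |x i| := by
  have hconst : ∀ᵐ ω ∂μ, ∀ k, ∀ i ∈ A k, ∀ j ∈ A k, Z ω i = Z ω j := by
    simp only [ae_all_iff]
    intro k i hi j hj
    exact (hZ.completelyDependent_iff i j).1 (hA.completelyDependent k i hi j hj)
  have hblock : ∀ᵐ ω ∂μ, ∀ i j, i ≠ j → Z ω i ≠ 0 → Z ω j ≠ 0 → ∃ k, i ∈ A k ∧ j ∈ A k := by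
    simp only [ae_all_iff]
    intro i j hij
    obtain hdep | hzero := hZ.completelyDependent_or_ae_eq_zero_or_eq_zero
      (fun x => (dNorm_mul_eq_dNorm_prod hindep hid x).symm.trans (hidem x)) hij
    · exact .of_forall fun _ _ _ => hA.exists_mem i j hij hdep
    · filter_upwards [hzero] with ω hω hi hj using (hω.elim hi hj).elim
  choose q hq using hA.nonempty
  calc dNorm Z μ x
      = ∫ ω, (∑ k, (⨆ i ∈ A k, |x i|) * Z ω (q k) +
          ∑ i ∈ Finset.univ \ Finset.univ.biUnion A, |x i| * Z ω i) ∂μ := by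
        refine integral_congr_ae ?_
        filter_upwards [ae_all_iff.2 hZ.nonneg, hconst, hblock] with ω hnonneg hconst hblock
        exact iSup_abs_mul_eq_sum_add_sum hA.disjoint hq hnonneg hconst hblock x
    _ = _ := by
        have hint (i : ι) (c : ℝ) : Integrable (fun ω => c * Z ω i) μ :=
          (hZ.integrable i).const_mul c
        rw [integral_add (integrable_finsetSum _ fun k _ => hint _ _)
          (integrable_finsetSum _ fun i _ => hint _ _),
          integral_finsetSum _ fun k _ => hint _ _, integral_finsetSum _ fun i _ => hint _ _]
        simp only [integral_const_mul, hZ.integral_eq_one, mul_one]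

end DNorm

/-- An idempotent D-norm with nonempty complete dependence frame `A₁, …, A_K` is the
corresponding mixture of sup-norms and the L¹-norm. -/
theorem idempotent_dNorm_with_CDF {d K : ℕ} (hd : 0 < d) (hK : 1 ≤ K) (hKd : K < d)
    {Ω : Type*} [MeasurableSpace Ω] (μ : Measure Ω) [IsProbabilityMeasure μ]
    (Z Z' : Ω → Fin d → ℝ) (hZm : Measurable Z) (hZ'm : Measurable Z')
    (hZnn : ∀ i, ∀ᵐ ω ∂μ, 0 ≤ Z ω i)
    (hZint : ∀ i, Integrable (fun ω => Z ω i) μ)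
    (hZmean : ∀ i, ∫ ω, Z ω i ∂μ = 1)
    (hindep : IndepFun Z Z' μ) (hid : μ.map Z' = μ.map Z)
    (A : Fin K → Finset (Fin d))
    (hAcard : ∀ k, 2 ≤ (A k).card)
    (hAdisj : ∀ k l, k ≠ l → Disjoint (A k) (A l))
    (hdep : ∀ k, ∀ i ∈ A k, ∀ j ∈ A k, ∀ x y : ℝ,
      (∫ ω, max (|x| * Z ω i) (|y| * Z ω j) ∂μ) = max |x| |y|)
    (hnodep : ∀ i j : Fin d, i ≠ j → (¬ ∃ k, i ∈ A k ∧ j ∈ A k) →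
      ∃ x y : ℝ, (∫ ω, max (|x| * Z ω i) (|y| * Z ω j) ∂μ) ≠ max |x| |y|)
    (hidem : ∀ x : Fin d → ℝ,
      (∫ ω, ⨆ i, |x i| * (Z ω i * Z' ω i) ∂μ) = ∫ ω, ⨆ i, |x i| * Z ω i ∂μ) :
    ∀ x : Fin d → ℝ,
      (∫ ω, ⨆ i, |x i| * Z ω i ∂μ) =
        (∑ k : Fin K, ⨆ i ∈ A k, |x i|) +
          ∑ i ∈ Finset.univ \ Finset.univ.biUnion A, |x i| := by
  have : Nonempty (Fin d) := Fin.pos_iff_nonempty.1 hd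
  refine idempotent_dNorm_with_CDF_general ⟨hZnn, hZint, hZmean⟩ hindep
    ⟨hZ'm.aemeasurable, hZm.aemeasurable, hid⟩ hidem
    ⟨fun k => Finset.card_pos.1 (two_pos.trans_le (hAcard k)), hAdisj, hdep, fun i j hij h => ?_⟩
  by_contra hk
  obtain ⟨x, y, hxy⟩ := hnodep i j hij hk
  exact hxy (h x y)
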